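/- Let N be a Lagrangian chain-group on V to K = F², let X, Y ⊆ V be disjoint, and let k be an integer. Then min{λ_N(Z) : X ⊆ Z ⊆ V∖Y} = max{λ_{N∖U/W}(X) : (U,W) a partition of V∖(X∪Y)} (generalization of Tutte's linking theorem). -/

import Mathlib

variable {F : Type*} [Field F] {V : Type*} [Fintype V] [DecidableEq V]

def bplusL (F : Type*) [Field F] : (F × F) →ₗ[F] (F × F) →ₗ[F] F :=
  LinearMap.mk₂ F (fun x y => x.1 * y.2 + x.2 * y.1)
    (by intros; simp [Prod.fst_add, Prod.snd_add]; ring)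
    (by intros; simp [Prod.smul_fst, Prod.smul_snd, smul_eq_mul]; ring)
    (by intros; simp [Prod.fst_add, Prod.snd_add]; ring)
    (by intros; simp [Prod.smul_fst, Prod.smul_snd, smul_eq_mul]; ring)

def bminusL (F : Type*) [Field F] : (F × F) →ₗ[F] (F × F) →ₗ[F] F :=
  LinearMap.mk₂ F (fun x y => x.1 * y.2 - x.2 * y.1)
    (by intros; simp [Prod.fst_add, Prod.snd_add]; ring)
    (by intros; simp [Prod.smul_fst, Prod.smul_snd, smul_eq_mul]; ring)
    (by intros; simp [Prod.fst_add, Prod.snd_add]; ring)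
    (by intros; simp [Prod.smul_fst, Prod.smul_snd, smul_eq_mul]; ring)

/-- Restriction of chains to a subset `X` of the ground set. -/
def res (F K : Type*) [Semiring F] [AddCommMonoid K] [Module F K]
    {V : Type*} (X : Finset V) : (V → K) →ₗ[F] ({x // x ∈ X} → K) :=
  LinearMap.funLeft F K Subtype.val

/-- Chains vanishing outside `X`. -/
def vanish (F : Type*) [Semiring F] {K : Type*} [AddCommMonoid K] [Module F K]
    {V : Type*} (X : Finset V) : Submodule F (V → K) where
  carrier := {f | ∀ v ∉ X, f v = 0}
  add_mem' := by
    intro a b ha hb v hv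
    simp only [Pi.add_apply, ha v hv, hb v hv, add_zero]
  zero_mem' := by intro v hv; rfl
  smul_mem' := by
    intro c a ha v hv
    simp only [Pi.smul_apply, ha v hv, smul_zero]

/-- `N×X`, the restriction to `X` of the chains in `N` vanishing outside `X`. -/
def timesTo {W : Type*} {K : Type*} [AddCommGroup K] [Module F K]
    (N : Submodule F (W → K)) (X : Finset W) : Submodule F ({x // x ∈ X} → K) :=
  (N ⊓ vanish F X).map (res F K X)

/-- The connectivity function
`λ_N(U) = (dim N − dim(N×(W∖U)) − dim(N×U)) / 2` of a chain-group `N`. -/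
noncomputable def lam {W : Type*} [Fintype W] [DecidableEq W]
    {K : Type*} [AddCommGroup K] [Module F K]
    (N : Submodule F (W → K)) (U : Finset W) : ℚ :=
  ((Module.finrank F N : ℚ) - (Module.finrank F (timesTo N Uᶜ) : ℚ)
    - (Module.finrank F (timesTo N U) : ℚ)) / 2

/-- The constraint `⟨f(v),(1,0)⟩_K = 0` for all `v ∈ X`, used for deletion. -/
def delC (β : (F × F) →ₗ[F] (F × F) →ₗ[F] F) (X : Finset V) :
    Submodule F (V → F × F) :=
  ⨅ v ∈ X, LinearMap.ker ((β.flip (1, 0)).comp (LinearMap.proj v))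

/-- The constraint `⟨f(v),(0,1)⟩_K = 0` for all `v ∈ X`, used for contraction. -/
def conC (β : (F × F) →ₗ[F] (F × F) →ₗ[F] F) (X : Finset V) :
    Submodule F (V → F × F) :=
  ⨅ v ∈ X, LinearMap.ker ((β.flip (0, 1)).comp (LinearMap.proj v))

/-- The deletion `N∖X` of a chain-group `N`. -/
def deleteCG (β : (F × F) →ₗ[F] (F × F) →ₗ[F] F) (N : Submodule F (V → F × F))
    (X : Finset V) : Submodule F ({x // x ∈ Xᶜ} → F × F) :=
  (N ⊓ delC β X).map (res F (F × F) Xᶜ)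

/-- The contraction `N/X` of a chain-group `N`. -/
def contractCG (β : (F × F) →ₗ[F] (F × F) →ₗ[F] F) (N : Submodule F (V → F × F))
    (X : Finset V) : Submodule F ({x // x ∈ Xᶜ} → F × F) :=
  (N ⊓ conC β X).map (res F (F × F) Xᶜ)


/-- The minor `N/X∖Y` of a chain-group `N`, obtained by contracting `X` and
deleting `Y`, on the ground set `V∖(X∪Y)`. -/
def minorCG (β : (F × F) →ₗ[F] (F × F) →ₗ[F] F) (N : Submodule F (V → F × F))
    (X Y : Finset V) : Submodule F ({x // x ∈ (X ∪ Y)ᶜ} → F × F) :=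
  (N ⊓ conC β X ⊓ delC β Y).map (res F (F × F) (X ∪ Y)ᶜ)

/-- The chains whose first coordinate is supported in `P` and whose second coordinate is
supported in `Q`. -/
def box (F : Type*) [Field F] {V : Type*} (P Q : Finset V) : Submodule F (V → F × F) where
  carrier := {f | (∀ v ∉ P, (f v).1 = 0) ∧ ∀ v ∉ Q, (f v).2 = 0}
  add_mem' := by
    rintro a b ⟨ha, ha'⟩ ⟨hb, hb'⟩
    exact ⟨fun v hv => by simp [ha v hv, hb v hv], fun v hv => by simp [ha' v hv, hb' v hv]⟩
  zero_mem' := ⟨fun _ _ => rfl, fun _ _ => rfl⟩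
  smul_mem' := by
    rintro c a ⟨ha, ha'⟩
    exact ⟨fun v hv => by simp [ha v hv], fun v hv => by simp [ha' v hv]⟩

lemma mem_box {F : Type*} [Field F] {V : Type*}
    {P Q : Finset V} {f : V → F × F} :
    f ∈ box F P Q ↔ (∀ v ∉ P, (f v).1 = 0) ∧ ∀ v ∉ Q, (f v).2 = 0 := Iff.rfl

lemma box_mono {F : Type*} [Field F] {V : Type*}
    {P Q P' Q' : Finset V} (hP : P ⊆ P') (hQ : Q ⊆ Q') :
    box F P Q ≤ box F P' Q' := fun _ hf =>
  ⟨fun v hv => hf.1 v fun h => hv (hP h), fun v hv => hf.2 v fun h => hv (hQ h)⟩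

lemma box_inf_box {F : Type*} [Field F] {V : Type*} [DecidableEq V]
    (P Q P' Q' : Finset V) :
    box F P Q ⊓ box F P' Q' = box F (P ∩ P') (Q ∩ Q') := by
  refine le_antisymm ?_ (le_inf (box_mono Finset.inter_subset_left Finset.inter_subset_left)
    (box_mono Finset.inter_subset_right Finset.inter_subset_right))
  rintro f ⟨hf, hf'⟩
  refine ⟨fun v hv => ?_, fun v hv => ?_⟩
  · by_cases h : v ∈ P
    · exact hf'.1 v fun h' => hv (Finset.mem_inter.2 ⟨h, h'⟩)
    · exact hf.1 v h
  · by_cases h : v ∈ Q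
    · exact hf'.2 v fun h' => hv (Finset.mem_inter.2 ⟨h, h'⟩)
    · exact hf.2 v h

/-- A chain in `box F P Q` amounts to a choice of coordinates on `P` and on `Q`. -/
def boxEquiv (F : Type*) [Field F] {V : Type*} [DecidableEq V] (P Q : Finset V) :
    box F P Q ≃ₗ[F] ({x // x ∈ P} → F) × ({x // x ∈ Q} → F) where
  toFun f := (fun p => (f.1 p).1, fun q => (f.1 q).2)
  map_add' _ _ := rfl
  map_smul' _ _ := rfl
  invFun g := ⟨fun v => (if h : v ∈ P then g.1 ⟨v, h⟩ else 0, if h : v ∈ Q then g.2 ⟨v, h⟩ else 0),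
    fun v hv => by simp [hv], fun v hv => by simp [hv]⟩
  left_inv f := by
    ext v
    · by_cases h : v ∈ P
      · simp [h]
      · simp [h, f.2.1 v h]
    · by_cases h : v ∈ Q
      · simp [h]
      · simp [h, f.2.2 v h]
  right_inv g := by ext <;> simp

lemma finrank_box {F : Type*} [Field F] {V : Type*} [DecidableEq V]
    (P Q : Finset V) : Module.finrank F (box F P Q) = P.card + Q.card := by
  rw [(boxEquiv F P Q).finrank_eq]
  simp

lemma exists_ne_zero_forall_form_eq {β : (F × F) →ₗ[F] (F × F) →ₗ[F] F}
    (hβ : β = bplusL F ∨ β = bminusL F) :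
    ∃ ε : F, ε ≠ 0 ∧ ∀ x y, β x y = x.1 * y.2 + ε * (x.2 * y.1) := by
  rcases hβ with rfl | rfl
  · exact ⟨1, one_ne_zero, fun x y => by simp [bplusL]⟩
  · exact ⟨-1, neg_ne_zero.2 one_ne_zero, fun x y => by simp [bminusL, sub_eq_add_neg]⟩

/-- The bilinear form on chains induced by a bilinear form on their values. -/
def chainForm (β : (F × F) →ₗ[F] (F × F) →ₗ[F] F) : LinearMap.BilinForm F (V → F × F) :=
  ∑ v, β.compl₁₂ (LinearMap.proj v) (LinearMap.proj v)

lemma chainForm_apply {F : Type*} [Field F] {V : Type*} [Fintype V]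
    (β : (F × F) →ₗ[F] (F × F) →ₗ[F] F) (f g : V → F × F) :
    chainForm β f g = ∑ v, β (f v) (g v) := by
  simp [chainForm, LinearMap.sum_apply]

lemma chainForm_nondegenerate {β : (F × F) →ₗ[F] (F × F) →ₗ[F] F}
    (hβ : β = bplusL F ∨ β = bminusL F) : (chainForm (V := V) β).Nondegenerate := by
  obtain ⟨ε, hε, h⟩ := exists_ne_zero_forall_form_eq hβ
  constructor
  · intro f hf
    funext v
    have h1 := hf (Pi.single v (0, 1))
    have h2 := hf (Pi.single v (1, 0))
    rw [chainForm_apply, Finset.sum_eq_single v (by intro w _ hw; simp [hw]) (by simp)] at h1 h2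
    simp only [h, Pi.single_eq_same, mul_one, mul_zero, add_zero, zero_add, mul_eq_zero, hε,
      false_or] at h1 h2
    exact Prod.ext h1 h2
  · intro f hf
    funext v
    have h1 := hf (Pi.single v (0, 1))
    have h2 := hf (Pi.single v (1, 0))
    rw [chainForm_apply, Finset.sum_eq_single v (by intro w _ hw; simp [hw]) (by simp)] at h1 h2
    simp only [h, Pi.single_eq_same, one_mul, zero_mul, mul_zero, add_zero, zero_add, mul_eq_zero,
      hε, false_or] at h1 h2
    exact Prod.ext h1 h2

lemma finrank_chains {F : Type*} [Field F] {V : Type*} [Fintype V] :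
    Module.finrank F (V → F × F) = 2 * Fintype.card V := by
  simp [Module.finrank_pi_fintype, mul_comm]

lemma orthogonal_box {β : (F × F) →ₗ[F] (F × F) →ₗ[F] F}
    (hβ : β = bplusL F ∨ β = bminusL F) (P Q : Finset V) :
    (chainForm β).orthogonal (box F P Q) = box F Qᶜ Pᶜ := by
  refine (Submodule.eq_of_le_of_finrank_eq ?_ ?_).symm
  · obtain ⟨ε, -, h⟩ := exists_ne_zero_forall_form_eq hβ
    intro g hg
    rw [LinearMap.BilinForm.mem_orthogonal_iff]
    intro f hf
    rw [chainForm_apply]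
    refine Finset.sum_eq_zero fun v _ => ?_
    have h1 : (f v).1 * (g v).2 = 0 := by
      by_cases hv : v ∈ P
      · rw [hg.2 v (by simpa using hv), mul_zero]
      · rw [hf.1 v hv, zero_mul]
    have h2 : (f v).2 * (g v).1 = 0 := by
      by_cases hv : v ∈ Q
      · rw [hg.1 v (by simpa using hv), mul_zero]
      · rw [hf.2 v hv, zero_mul]
    rw [h, h1, h2, mul_zero, add_zero]
  · rw [LinearMap.BilinForm.finrank_orthogonal (chainForm_nondegenerate hβ), finrank_chains,
      finrank_box, finrank_box, Finset.card_compl, Finset.card_compl]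
    have := P.card_le_univ
    have := Q.card_le_univ
    omega

/-- The dimension of the space of chains in `N` lying in `box F P Q`. -/
noncomputable def boxDim (N : Submodule F (V → F × F)) (P Q : Finset V) : ℕ :=
  Module.finrank F ↥(N ⊓ box F P Q)

lemma boxDim_supermodular (N : Submodule F (V → F × F)) (P Q P' Q' : Finset V) :
    boxDim N P Q + boxDim N P' Q' ≤
      boxDim N (P ∩ P') (Q ∩ Q') + boxDim N (P ∪ P') (Q ∪ Q') := by
  unfold boxDim
  rw [← Submodule.finrank_sup_add_finrank_inf_eq, ← inf_inf_distrib_left, box_inf_box, add_comm]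
  gcongr
  refine Submodule.finrank_mono (sup_le ?_ ?_)
  · exact inf_le_inf_left _ (box_mono Finset.subset_union_left Finset.subset_union_left)
  · exact inf_le_inf_left _ (box_mono Finset.subset_union_right Finset.subset_union_right)

lemma boxDim_mono {F : Type*} [Field F] {V : Type*} [Fintype V]
    (N : Submodule F (V → F × F)) {P Q P' Q' : Finset V}
    (hP : P ⊆ P') (hQ : Q ⊆ Q') : boxDim N P Q ≤ boxDim N P' Q' :=
  Submodule.finrank_mono (inf_le_inf_left _ (box_mono hP hQ))

lemma boxDim_compl {β : (F × F) →ₗ[F] (F × F) →ₗ[F] F}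
    (hβ : β = bplusL F ∨ β = bminusL F) {N : Submodule F (V → F × F)}
    (hiso : ∀ u ∈ N, ∀ w ∈ N, ∑ x, β (u x) (w x) = 0)
    (hdim : Module.finrank F N = Fintype.card V) (P Q : Finset V) :
    boxDim N Qᶜ Pᶜ + P.card + Q.card = Fintype.card V + boxDim N P Q := by
  have hnd := chainForm_nondegenerate (V := V) hβ
  have hN : (chainForm β).orthogonal N = N := by
    refine (Submodule.eq_of_le_of_finrank_eq ?_ ?_).symm
    · intro g hg f hf
      rw [chainForm_apply]
      exact hiso f hf g hg
    · rw [LinearMap.BilinForm.finrank_orthogonal hnd, finrank_chains, hdim]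
      omega
  have hsup : (chainForm β).orthogonal (N ⊔ box F P Q) = N ⊓ box F Qᶜ Pᶜ := by
    rw [← orthogonal_box hβ P Q]
    refine le_antisymm (le_inf ?_ ?_) ?_
    · exact (LinearMap.BilinForm.orthogonal_le le_sup_left).trans hN.le
    · exact LinearMap.BilinForm.orthogonal_le le_sup_right
    · rintro g ⟨hg, hg'⟩ f hf
      obtain ⟨a, ha, b, hb, rfl⟩ := Submodule.mem_sup.1 hf
      rw [← hN] at hg
      have h1 := hg a ha
      have h2 := hg' b hb
      rw [map_add, LinearMap.add_apply, h1, h2, add_zero]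
  have h1 := LinearMap.BilinForm.finrank_orthogonal hnd (N ⊔ box F P Q)
  rw [hsup, finrank_chains] at h1
  have h2 := Submodule.finrank_sup_add_finrank_inf_eq N (box F P Q)
  rw [finrank_box, hdim] at h2
  have h3 := (N ⊔ box F P Q).finrank_le
  rw [finrank_chains] at h3
  unfold boxDim
  omega

lemma finrank_map_add_finrank_inf_ker {E E' : Type*} [AddCommGroup E] [Module F E]
    [FiniteDimensional F E] [AddCommGroup E'] [Module F E'] (g : E →ₗ[F] E')
    (M : Submodule F E) :
    Module.finrank F (M.map g) + Module.finrank F ↥(M ⊓ LinearMap.ker g) =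
      Module.finrank F M := by
  rw [← (g.domRestrict M).finrank_range_add_finrank_ker, LinearMap.range_domRestrict,
    LinearMap.ker_domRestrict, ← Submodule.finrank_map_subtype_eq, Submodule.map_comap_subtype]

lemma mem_delC {F : Type*} [Field F] {V : Type*}
    {β : (F × F) →ₗ[F] (F × F) →ₗ[F] F} (hβ : β = bplusL F ∨ β = bminusL F)
    {U : Finset V} {f : V → F × F} : f ∈ delC β U ↔ ∀ v ∈ U, (f v).2 = 0 := by
  obtain ⟨ε, hε, h⟩ := exists_ne_zero_forall_form_eq hβ
  simp [delC, h, hε]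

lemma mem_conC {F : Type*} [Field F] {V : Type*}
    {β : (F × F) →ₗ[F] (F × F) →ₗ[F] F} (hβ : β = bplusL F ∨ β = bminusL F)
    {W : Finset V} {f : V → F × F} : f ∈ conC β W ↔ ∀ v ∈ W, (f v).1 = 0 := by
  obtain ⟨ε, hε, h⟩ := exists_ne_zero_forall_form_eq hβ
  simp [conC, h]

lemma conC_inf_delC {β : (F × F) →ₗ[F] (F × F) →ₗ[F] F}
    (hβ : β = bplusL F ∨ β = bminusL F) (U W : Finset V) :
    conC β W ⊓ delC β U = box F Wᶜ Uᶜ := by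
  ext f
  simp [mem_box, mem_delC hβ, mem_conC hβ]

lemma mem_vanish {F : Type*} [Field F] {V : Type*}
    {Z : Finset V} {f : V → F × F} : f ∈ vanish F Z ↔ ∀ v ∉ Z, f v = 0 := Iff.rfl

lemma mem_ker_res {F : Type*} [Field F] {V : Type*}
    {Z : Finset V} {f : V → F × F} :
    f ∈ LinearMap.ker (res F (F × F) Z) ↔ ∀ v ∈ Z, f v = 0 := by
  simp [res, funext_iff]

lemma finrank_timesTo (N : Submodule F (V → F × F)) (Z : Finset V) :
    Module.finrank F (timesTo N Z) = boxDim N Z Z := by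
  have hv : vanish F Z = box F Z Z := by
    ext f
    simp [mem_vanish, mem_box, Prod.ext_iff, forall_and]
  have h := finrank_map_add_finrank_inf_ker (res F (F × F) Z) (N ⊓ vanish F Z)
  have hbot : N ⊓ vanish F Z ⊓ LinearMap.ker (res F (F × F) Z) = ⊥ := by
    rw [eq_bot_iff]
    rintro f ⟨⟨-, hf⟩, hf'⟩
    rw [SetLike.mem_coe, mem_ker_res] at hf'
    rw [Submodule.mem_bot]
    funext v
    by_cases hv : v ∈ Z
    · exact hf' v hv
    · exact hf v hv
  rw [hbot, finrank_bot, add_zero] at h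
  rw [timesTo, h, hv, boxDim]

lemma finrank_minorCG {β : (F × F) →ₗ[F] (F × F) →ₗ[F] F}
    (hβ : β = bplusL F ∨ β = bminusL F) (N : Submodule F (V → F × F)) {U W : Finset V}
    (hUW : Disjoint U W) :
    Module.finrank F (minorCG β N W U) + boxDim N U W = boxDim N Wᶜ Uᶜ := by
  have h := finrank_map_add_finrank_inf_ker (res F (F × F) (W ∪ U)ᶜ) (N ⊓ conC β W ⊓ delC β U)
  rw [inf_assoc, conC_inf_delC hβ, inf_assoc] at h
  have hk : box F Wᶜ Uᶜ ⊓ LinearMap.ker (res F (F × F) (W ∪ U)ᶜ) = box F U W := by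
    ext f
    rw [Submodule.mem_inf, mem_ker_res, mem_box, mem_box]
    have := Finset.disjoint_left.1 hUW
    simp only [Prod.ext_iff, Finset.mem_compl, Finset.mem_union, Prod.fst_zero, Prod.snd_zero]
    grind
  rw [hk] at h
  rw [minorCG, inf_assoc, conC_inf_delC hβ]
  exact h

lemma finrank_timesTo_minorCG {β : (F × F) →ₗ[F] (F × F) →ₗ[F] F}
    (hβ : β = bplusL F ∨ β = bminusL F) (N : Submodule F (V → F × F)) {U W Z : Finset V}
    (hUW : Disjoint U W) (hZU : Disjoint Z U) (hZW : Disjoint Z W) :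
    Module.finrank F (timesTo (minorCG β N W U) (Z.subtype (· ∈ ((W ∪ U)ᶜ : Finset V)))) +
      boxDim N U W = boxDim N (Z ∪ U) (Z ∪ W) := by
  rw [finrank_timesTo]
  have hUW := Finset.disjoint_left.1 hUW
  have hZU := Finset.disjoint_left.1 hZU
  have hZW := Finset.disjoint_left.1 hZW
  set Z' : Finset {x // x ∈ (W ∪ U)ᶜ} := Z.subtype (· ∈ ((W ∪ U)ᶜ : Finset V)) with hZ'
  have hmap : minorCG β N W U ⊓ box F Z' Z' =
      (N ⊓ box F (Z ∪ U) (Z ∪ W)).map (res F (F × F) (W ∪ U)ᶜ) := by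
    rw [minorCG, inf_assoc, conC_inf_delC hβ]
    ext g
    constructor
    · rintro ⟨⟨f, ⟨hfN, hf⟩, rfl⟩, hg⟩
      refine ⟨f, ⟨hfN, ?_⟩, rfl⟩
      simp only [SetLike.mem_coe, mem_box, Subtype.forall, res, LinearMap.funLeft_apply, hZ',
        Finset.mem_subtype, Finset.mem_compl, Finset.mem_union] at hf hg ⊢
      grind
    · rintro ⟨f, ⟨hfN, hf⟩, rfl⟩
      refine ⟨⟨f, ⟨hfN, ?_⟩, rfl⟩, ?_⟩ <;>
      simp only [SetLike.mem_coe, mem_box, Subtype.forall, res, LinearMap.funLeft_apply, hZ',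
        Finset.mem_subtype, Finset.mem_compl, Finset.mem_union] at hf ⊢ <;>
      grind
  have hk : box F (Z ∪ U) (Z ∪ W) ⊓ LinearMap.ker (res F (F × F) (W ∪ U)ᶜ) = box F U W := by
    ext f
    rw [Submodule.mem_inf, mem_ker_res, mem_box, mem_box]
    simp only [Prod.ext_iff, Finset.mem_compl, Finset.mem_union, Prod.fst_zero, Prod.snd_zero]
    grind
  have h := finrank_map_add_finrank_inf_ker (res F (F × F) (W ∪ U)ᶜ)
    (N ⊓ box F (Z ∪ U) (Z ∪ W))
  rw [inf_assoc, hk, ← hmap] at h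
  exact h

/-- The connectivity of `Z` in the minor of `N` obtained by deleting `U` and contracting `W`,
for `Z`, `U` and `W` pairwise disjoint. -/
noncomputable def minorConn (N : Submodule F (V → F × F)) (U W Z : Finset V) : ℤ :=
  Z.card - boxDim N (Z ∪ U) (Z ∪ W) + boxDim N U W

lemma minorConn_eq_of_partition {β : (F × F) →ₗ[F] (F × F) →ₗ[F] F}
    (hβ : β = bplusL F ∨ β = bminusL F) {N : Submodule F (V → F × F)}
    (hiso : ∀ u ∈ N, ∀ w ∈ N, ∑ x, β (u x) (w x) = 0)
    (hdim : Module.finrank F N = Fintype.card V) {U W X Y : Finset V} (hUW : Disjoint U W)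
    (hXY : Disjoint X Y) (h : U ∪ W = (X ∪ Y)ᶜ) :
    minorConn N U W X = minorConn N U W Y := by
  have hd := boxDim_compl hβ hiso hdim (X ∪ U) (X ∪ W)
  have hUW' := Finset.disjoint_left.1 hUW
  have hXY' := Finset.disjoint_left.1 hXY
  have hmem : ∀ v, (v ∈ U ∨ v ∈ W) ↔ ¬ (v ∈ X ∨ v ∈ Y) := fun v => by
    simpa using Finset.ext_iff.1 h v
  have e1 : (X ∪ W)ᶜ = Y ∪ U := by ext v; simp only [Finset.mem_compl, Finset.mem_union]; grind
  have e2 : (X ∪ U)ᶜ = Y ∪ W := by ext v; simp only [Finset.mem_compl, Finset.mem_union]; grind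
  have c1 := Finset.card_compl_add_card (X ∪ W)
  have c2 : (Y ∪ U).card = Y.card + U.card := Finset.card_union_of_disjoint (by
    rw [Finset.disjoint_left]; grind)
  have c3 : (X ∪ U).card = X.card + U.card := Finset.card_union_of_disjoint (by
    rw [Finset.disjoint_left]; grind)
  rw [e1, e2] at hd
  rw [e1] at c1
  unfold minorConn
  omega

lemma lam_minorCG {β : (F × F) →ₗ[F] (F × F) →ₗ[F] F}
    (hβ : β = bplusL F ∨ β = bminusL F) {N : Submodule F (V → F × F)}
    (hiso : ∀ u ∈ N, ∀ w ∈ N, ∑ x, β (u x) (w x) = 0)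
    (hdim : Module.finrank F N = Fintype.card V) {U W X Y : Finset V} (hUW : Disjoint U W)
    (hXY : Disjoint X Y) (h : U ∪ W = (X ∪ Y)ᶜ) :
    lam (minorCG β N W U) (X.subtype (· ∈ ((W ∪ U)ᶜ : Finset V))) = minorConn N U W X := by
  have hmem : ∀ v, (v ∈ U ∨ v ∈ W) ↔ ¬ (v ∈ X ∨ v ∈ Y) := fun v => by
    simpa using Finset.ext_iff.1 h v
  have hXY' := Finset.disjoint_left.1 hXY
  have hc : (X.subtype (· ∈ ((W ∪ U)ᶜ : Finset V)))ᶜ =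
      Y.subtype (· ∈ ((W ∪ U)ᶜ : Finset V)) := by
    ext ⟨v, hv⟩
    simp only [Finset.mem_compl, Finset.mem_subtype, Finset.mem_union] at hv ⊢
    grind
  have hX := finrank_timesTo_minorCG hβ N hUW (Z := X) (by rw [Finset.disjoint_left]; grind)
    (by rw [Finset.disjoint_left]; grind)
  have hY := finrank_timesTo_minorCG hβ N hUW (Z := Y) (by rw [Finset.disjoint_left]; grind)
    (by rw [Finset.disjoint_left]; grind)
  have hm := finrank_minorCG hβ N hUW
  have hd := boxDim_compl hβ hiso hdim U W
  have he := minorConn_eq_of_partition hβ hiso hdim hUW hXY h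
  have c1 := Finset.card_compl_add_card (X ∪ Y)
  rw [← h, Finset.card_union_of_disjoint hUW, Finset.card_union_of_disjoint hXY] at c1
  rw [lam, hc, div_eq_iff two_ne_zero]
  unfold minorConn at he ⊢
  qify at hX hY hm hd he c1
  push_cast
  linarith

lemma lam_eq_minorConn {β : (F × F) →ₗ[F] (F × F) →ₗ[F] F}
    (hβ : β = bplusL F ∨ β = bminusL F) {N : Submodule F (V → F × F)}
    (hiso : ∀ u ∈ N, ∀ w ∈ N, ∑ x, β (u x) (w x) = 0)
    (hdim : Module.finrank F N = Fintype.card V) (Z : Finset V) :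
    lam N Z = minorConn N ∅ ∅ Z := by
  have hd := boxDim_compl hβ hiso hdim Z Z
  have h0 : boxDim N ∅ ∅ = 0 := by
    have h := Submodule.finrank_mono (inf_le_right : N ⊓ box F ∅ ∅ ≤ _)
    rw [finrank_box] at h
    simpa [boxDim] using h
  rw [lam, finrank_timesTo, finrank_timesTo, hdim, div_eq_iff two_ne_zero]
  simp only [minorConn, Finset.union_empty, h0]
  qify at hd
  push_cast
  linarith

lemma minorConn_anti (N : Submodule F (V → F × F)) {U W U' W' Z : Finset V} (hU : U ⊆ U')
    (hW : W ⊆ W') (hZU : Disjoint Z U') (hZW : Disjoint Z W') :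
    minorConn N U' W' Z ≤ minorConn N U W Z := by
  have h := boxDim_supermodular N (Z ∪ U) (Z ∪ W) U' W'
  have hZU' := Finset.disjoint_left.1 hZU
  have hZW' := Finset.disjoint_left.1 hZW
  have e1 : (Z ∪ U) ∩ U' = U := by grind
  have e2 : (Z ∪ W) ∩ W' = W := by grind
  have e3 : Z ∪ U ∪ U' = Z ∪ U' := by grind
  have e4 : Z ∪ W ∪ W' = Z ∪ W' := by grind
  rw [e1, e2, e3, e4] at h
  unfold minorConn
  omega

lemma minorConn_inter_add_minorConn_union_le (N : Submodule F (V → F × F))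
    {U W Z₁ Z₂ : Finset V} {e : V} (heU : e ∉ U) (heW : e ∉ W) (he₁ : e ∉ Z₁) (he₂ : e ∉ Z₂) :
    minorConn N U W (Z₁ ∩ Z₂) + minorConn N U W (insert e (Z₁ ∪ Z₂)) ≤
      minorConn N (insert e U) W Z₁ + minorConn N U (insert e W) Z₂ + 1 := by
  have h := boxDim_supermodular N (Z₁ ∪ insert e U) (Z₁ ∪ W) (Z₂ ∪ U) (Z₂ ∪ insert e W)
  have e1 : (Z₁ ∪ insert e U) ∩ (Z₂ ∪ U) = Z₁ ∩ Z₂ ∪ U := by grind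
  have e2 : (Z₁ ∪ W) ∩ (Z₂ ∪ insert e W) = Z₁ ∩ Z₂ ∪ W := by grind
  have e3 : Z₁ ∪ insert e U ∪ (Z₂ ∪ U) = insert e (Z₁ ∪ Z₂) ∪ U := by grind
  have e4 : Z₁ ∪ W ∪ (Z₂ ∪ insert e W) = insert e (Z₁ ∪ Z₂) ∪ W := by grind
  rw [e1, e2, e3, e4] at h
  have h1 := boxDim_mono N (Finset.subset_insert e U) (Finset.Subset.refl W)
  have h2 := boxDim_mono N (Finset.Subset.refl U) (Finset.subset_insert e W)
  have c1 := Finset.card_inter_add_card_union Z₁ Z₂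
  have c2 : (insert e (Z₁ ∪ Z₂)).card = (Z₁ ∪ Z₂).card + 1 :=
    Finset.card_insert_of_notMem (by simp [he₁, he₂])
  unfold minorConn
  omega

lemma exists_partition_le_minorConn (N : Submodule F (V → F × F)) {X Y : Finset V} {k : ℤ}
    (R : Finset V) : ∀ U W : Finset V, Disjoint U W → Disjoint R (U ∪ W) →
      R ∪ (U ∪ W) = (X ∪ Y)ᶜ → Disjoint X Y →
      (∀ Z, X ⊆ Z → Z ⊆ X ∪ R → k ≤ minorConn N U W Z) →
      ∃ U' W' : Finset V, U' ∪ W' = (X ∪ Y)ᶜ ∧ Disjoint U' W' ∧ k ≤ minorConn N U' W' X := by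
  induction R using Finset.induction_on with
  | empty =>
    intro U W hUW _ h _ hk
    exact ⟨U, W, by simpa using h, hUW, hk X subset_rfl (by simp)⟩
  | insert e R he ih =>
    intro U W hUW hR h hXY hk
    have hmem : ∀ v, v ∈ insert e R ∪ (U ∪ W) ↔ ¬ (v ∈ X ∨ v ∈ Y) := fun v => by
      rw [h]; simp
    rw [Finset.disjoint_left] at hUW hR
    have heU : e ∉ U := by grind
    have heW : e ∉ W := by grind
    have heX : e ∉ X := by grind
    by_cases h₁ : ∀ Z, X ⊆ Z → Z ⊆ X ∪ R → k ≤ minorConn N (insert e U) W Z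
    · refine ih (insert e U) W ?_ ?_ ?_ hXY h₁
      · rw [Finset.disjoint_left]; grind
      · rw [Finset.disjoint_left]; grind
      · rw [← h]; grind
    by_cases h₂ : ∀ Z, X ⊆ Z → Z ⊆ X ∪ R → k ≤ minorConn N U (insert e W) Z
    · refine ih U (insert e W) ?_ ?_ ?_ hXY h₂
      · rw [Finset.disjoint_left]; grind
      · rw [Finset.disjoint_left]; grind
      · rw [← h]; grind
    push Not at h₁ h₂
    obtain ⟨Z₁, hX₁, hR₁, hlt₁⟩ := h₁
    obtain ⟨Z₂, hX₂, hR₂, hlt₂⟩ := h₂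
    have hle := minorConn_inter_add_minorConn_union_le N heU heW
      (show e ∉ Z₁ by grind) (show e ∉ Z₂ by grind)
    have hi := hk (Z₁ ∩ Z₂) (by grind) (by grind)
    have hu := hk (insert e (Z₁ ∪ Z₂)) (by grind) (by grind)
    omega

/-- **Generalization of Tutte's linking theorem** for Lagrangian chain-groups:
for disjoint `X, Y ⊆ V` and any integer `k`, every `Z` with `X ⊆ Z ⊆ V∖Y`
satisfies `λ_N(Z) ≥ k` if and only if some minor `N∖U/W` of `N` on `X ∪ Y`
satisfies `λ_{N∖U/W}(X) ≥ k`; that is,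
`min{λ_N(Z) : X ⊆ Z ⊆ V∖Y} = max{λ_{N∖U/W}(X) : (U,W) partitions V∖(X∪Y)}`. -/
theorem tutte_linking (β : (F × F) →ₗ[F] (F × F) →ₗ[F] F)
    (hβ : β = bplusL F ∨ β = bminusL F)
    (N : Submodule F (V → F × F))
    (hiso : ∀ u ∈ N, ∀ w ∈ N, ∑ x, β (u x) (w x) = 0)
    (hdim : Module.finrank F N = Fintype.card V)
    (X Y : Finset V) (hXY : Disjoint X Y) (k : ℤ) :
    (∀ Z : Finset V, X ⊆ Z → Z ⊆ Yᶜ → (k : ℚ) ≤ lam N Z)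
      ↔ ∃ U W : Finset V, U ∪ W = (X ∪ Y)ᶜ ∧ U ∩ W = ∅ ∧
          (k : ℚ) ≤ lam (minorCG β N W U)
            (X.subtype (· ∈ ((W ∪ U)ᶜ : Finset V))) := by
  constructor
  · intro hk
    obtain ⟨U, W, h, hUW, hle⟩ := exists_partition_le_minorConn N (X := X) (Y := Y) (k := k)
      (X ∪ Y)ᶜ ∅ ∅ (by simp) (by simp) (by simp) hXY fun Z hXZ hZ => by
        have := hk Z hXZ (by
          intro v hv
          have := hZ hv
          have := Finset.disjoint_left.1 hXY
          simp only [Finset.mem_compl, Finset.mem_union] at *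
          grind)
        rw [lam_eq_minorConn hβ hiso hdim] at this
        exact_mod_cast this
    refine ⟨U, W, h, Finset.disjoint_iff_inter_eq_empty.1 hUW, ?_⟩
    rw [lam_minorCG hβ hiso hdim hUW hXY h]
    exact_mod_cast hle
  · rintro ⟨U, W, h, hUW, hk⟩ Z hXZ hZY
    rw [← Finset.disjoint_iff_inter_eq_empty] at hUW
    rw [lam_minorCG hβ hiso hdim hUW hXY h] at hk
    rw [lam_eq_minorConn hβ hiso hdim]
    refine hk.trans (Int.cast_le.2 ?_)
    have hmem : ∀ v, (v ∈ U ∨ v ∈ W) ↔ ¬ (v ∈ X ∨ v ∈ Y) := fun v => by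
      simpa using Finset.ext_iff.1 h v
    have hUW' := Finset.disjoint_left.1 hUW
    have hXY' := Finset.disjoint_left.1 hXY
    have hZY' : ∀ v ∈ Z, v ∉ Y := fun v hv => by simpa using hZY hv
    calc minorConn N U W X = minorConn N U W Y :=
          minorConn_eq_of_partition hβ hiso hdim hUW hXY h
      _ ≤ minorConn N (U \ Z) (W \ Z) Y := by
          refine minorConn_anti N Finset.sdiff_subset Finset.sdiff_subset ?_ ?_ <;>
          · rw [Finset.disjoint_left]; grind
      _ = minorConn N (U \ Z) (W \ Z) Z := by
          refine (minorConn_eq_of_partition hβ hiso hdim ?_ ?_ ?_).symm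
          · rw [Finset.disjoint_left]; grind
          · rw [Finset.disjoint_left]; grind
          · ext v
            simp only [Finset.mem_compl, Finset.mem_union, Finset.mem_sdiff]
            grind
      _ ≤ minorConn N ∅ ∅ Z := by
          refine minorConn_anti N (Finset.empty_subset _) (Finset.empty_subset _) ?_ ?_ <;>
          exact Finset.disjoint_sdiff
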